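/- arXiv:1309.1984 — 4 statements merged into one kernel-verified Lean document; each statement's English description precedes it below -/
import Mathlib

section
/- Let (M,ω) be a multisymplectic manifold of degree k+1, and let α₁ ∈ Ω^{k−q₁}(T*M), α₂ ∈ Ω^{k−q₂}(T*M) be Hamiltonian forms with associated Hamiltonian multivector fields Q₁ ∈ Ω^{q₁}(TM), Q₂ ∈ Ω^{q₂}(TM), such that q₁ + q₂ = k+1. Then {α₁,α₂} = 0 if and only if L_{Q₂}α₁ = 0 (and, symmetrically, if and only if L_{Q₁}α₂ = 0). In fact, under these hypotheses {α₁,α₂} = (−1)^{q₁+q₂+1} L_{Q₂}α₁. -/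
/-!
STATEMENT 1: Let `(M, ω)` be a multisymplectic manifold of degree `k+1`, and let
`α₁ ∈ Ω^{k−q₁}(T*M)`, `α₂ ∈ Ω^{k−q₂}(T*M)` be Hamiltonian forms with associated
Hamiltonian multivector fields `Q₁ ∈ Ω^{q₁}(TM)`, `Q₂ ∈ Ω^{q₂}(TM)`, such that
`q₁ + q₂ = k + 1`.  Then `{α₁, α₂} = 0` iff `L_{Q₂} α₁ = 0` (and, symmetrically, iff
`L_{Q₁} α₂ = 0`).  In fact, under these hypotheses
`{α₁, α₂} = (−1)^{q₁+q₂+1} L_{Q₂} α₁`.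
-/


/-- An abstract context for the calculus of smooth multivector fields and differential
forms on a smooth manifold `M`: `Form` is the space `Ω(T*M) = ⊕_l Ω^l(T*M)` of
differential forms, `MVF` the space `Ω(TM) = ⊕_q Ω^q(TM)` of multivector fields, with the
homogeneous pieces recorded by the submodule families `formOfDeg` and `mvfOfDeg`, together
with the exterior derivative `d`, the contraction `⌟` of a form by a multivector field
(`(X₁ ∧ ⋯ ∧ X_q) ⌟ α = X_q ⌟ ⋯ ⌟ X₁ ⌟ α`, extended linearly), the wedge product of
multivector fields, and the Schouten–Nijenhuis bracket `sn`, subject to their standard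
properties (the Lie derivative along a `q`-multivector field `Q` being
`L_Q α = Q ⌟ dα − (−1)^q d(Q ⌟ α)`). -/
structure MultiCtx (Form MVF : Type*) [AddCommGroup Form] [Module ℝ Form]
    [AddCommGroup MVF] [Module ℝ MVF] where
  /-- the homogeneous differential `l`-forms `Ω^l(T*M)` -/
  formOfDeg : ℕ → Submodule ℝ Form
  /-- the homogeneous `q`-multivector fields `Ω^q(TM)` -/
  mvfOfDeg : ℕ → Submodule ℝ MVF
  /-- the exterior derivative -/
  d : Form →ₗ[ℝ] Form
  /-- contraction `Q ⌟ α` of a form by a multivector field -/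
  contr : MVF →ₗ[ℝ] Form →ₗ[ℝ] Form
  /-- the wedge product of multivector fields -/
  wedge : MVF →ₗ[ℝ] MVF →ₗ[ℝ] MVF
  /-- the Schouten–Nijenhuis bracket -/
  sn : MVF → MVF → MVF
  d_mem : ∀ {l : ℕ} {α : Form}, α ∈ formOfDeg l → d α ∈ formOfDeg (l + 1)
  d_d : ∀ α : Form, d (d α) = 0
  contr_mem : ∀ {q l : ℕ} {Q : MVF} {α : Form}, Q ∈ mvfOfDeg q → α ∈ formOfDeg l →
    contr Q α ∈ formOfDeg (l - q)
  /-- contraction of an `l`-form by a `q`-multivector field vanishes when `q > l` -/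
  contr_zero : ∀ {q l : ℕ} {Q : MVF} {α : Form}, Q ∈ mvfOfDeg q → α ∈ formOfDeg l →
    l < q → contr Q α = 0
  wedge_mem : ∀ {a b : ℕ} {Q R : MVF}, Q ∈ mvfOfDeg a → R ∈ mvfOfDeg b →
    wedge Q R ∈ mvfOfDeg (a + b)
  /-- graded commutativity `R ∧ Q = (−1)^{ab} Q ∧ R` -/
  wedge_comm : ∀ {a b : ℕ} {Q R : MVF}, Q ∈ mvfOfDeg a → R ∈ mvfOfDeg b →
    wedge R Q = ((-1 : ℝ) ^ (a * b)) • wedge Q R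
  /-- `(Q ∧ R) ⌟ α = R ⌟ (Q ⌟ α)` -/
  contr_wedge : ∀ (Q R : MVF) (α : Form), contr (wedge Q R) α = contr R (contr Q α)
  sn_mem : ∀ {a b : ℕ} {Q R : MVF}, Q ∈ mvfOfDeg a → R ∈ mvfOfDeg b →
    sn Q R ∈ mvfOfDeg (a + b - 1)
  /-- `[Q, R] ⌟ α = (−1)^{ab+b} L_Q (R ⌟ α) − R ⌟ L_Q α` for `Q` of degree `a` and `R` of
  degree `b` -/
  sn_contr : ∀ {a b : ℕ} {Q R : MVF}, Q ∈ mvfOfDeg a → R ∈ mvfOfDeg b → ∀ α : Form,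
    contr (sn Q R) α
      = ((-1 : ℝ) ^ (a * b + b)) •
          (contr Q (d (contr R α)) - ((-1 : ℝ) ^ a) • d (contr Q (contr R α)))
        - contr R (contr Q (d α) - ((-1 : ℝ) ^ a) • d (contr Q α))

variable {Form MVF : Type*} [AddCommGroup Form] [Module ℝ Form]
  [AddCommGroup MVF] [Module ℝ MVF]

/-- The Lie derivative `L_Q α = Q ⌟ dα − (−1)^q d(Q ⌟ α)` of a differential form along a
`q`-multivector field. -/
def MultiCtx.lie (C : MultiCtx Form MVF) (q : ℕ) (Q : MVF) (α : Form) : Form :=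
  C.contr Q (C.d α) - ((-1 : ℝ) ^ q) • C.d (C.contr Q α)

/-- `ω` is a multisymplectic form of degree `k + 1`: a closed `(k+1)`-form which is
nondegenerate in the sense that `X ⌟ ω = 0` implies `X = 0` for vector fields `X`. -/
def MultiCtx.IsMultisymplectic (C : MultiCtx Form MVF) (k : ℕ) (ω : Form) : Prop :=
  ω ∈ C.formOfDeg (k + 1) ∧ C.d ω = 0 ∧
    ∀ X ∈ C.mvfOfDeg 1, C.contr X ω = 0 → X = 0

/-- `Q` is a Hamiltonian `q`-multivector field with Hamiltonian `l`-form `α` (for the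
multisymplectic form `ω`): `Q ⌟ ω = dα`. -/
def MultiCtx.IsHamiltonianPair (C : MultiCtx Form MVF) (ω : Form) (q l : ℕ)
    (Q : MVF) (α : Form) : Prop :=
  Q ∈ C.mvfOfDeg q ∧ α ∈ C.formOfDeg l ∧ C.contr Q ω = C.d α

/-- The bracket `{α₁, α₂} = (−1)^{q₁+q₂+1} (Q₁ ∧ Q₂) ⌟ ω` of Hamiltonian forms, expressed
through the associated Hamiltonian multivector fields `Q₁, Q₂` of degrees `q₁, q₂`. -/
def MultiCtx.bracket (C : MultiCtx Form MVF) (ω : Form) (q₁ q₂ : ℕ) (Q₁ Q₂ : MVF) : Form :=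
  ((-1 : ℝ) ^ (q₁ + q₂ + 1)) • C.contr (C.wedge Q₁ Q₂) ω

theorem bracket_eq_zero_iff_lie_eq_zero
    (C : MultiCtx Form MVF) (k q₁ q₂ l₁ l₂ : ℕ) (ω : Form)
    (hω : C.IsMultisymplectic k ω)
    (hq₁ : 1 ≤ q₁) (hq₂ : 1 ≤ q₂) (hl₁ : q₁ + l₁ = k) (hl₂ : q₂ + l₂ = k)
    (Q₁ Q₂ : MVF) (α₁ α₂ : Form)
    (h₁ : C.IsHamiltonianPair ω q₁ l₁ Q₁ α₁)
    (h₂ : C.IsHamiltonianPair ω q₂ l₂ Q₂ α₂)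
    (hsum : q₁ + q₂ = k + 1) :
    C.bracket ω q₁ q₂ Q₁ Q₂ = ((-1 : ℝ) ^ (q₁ + q₂ + 1)) • C.lie q₂ Q₂ α₁ ∧
    (C.bracket ω q₁ q₂ Q₁ Q₂ = 0 ↔ C.lie q₂ Q₂ α₁ = 0) ∧
    (C.bracket ω q₁ q₂ Q₁ Q₂ = 0 ↔ C.lie q₁ Q₁ α₂ = 0) := by
  obtain ⟨hQ₁, hα₁, e₁⟩ := h₁
  obtain ⟨hQ₂, hα₂, e₂⟩ := h₂
  have z₁ : C.contr Q₂ α₁ = 0 := C.contr_zero hQ₂ hα₁ (by omega)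
  have z₂ : C.contr Q₁ α₂ = 0 := C.contr_zero hQ₁ hα₂ (by omega)
  have w₁ : C.lie q₂ Q₂ α₁ = C.contr (C.wedge Q₁ Q₂) ω := by
    simp [MultiCtx.lie, z₁, C.contr_wedge, e₁]
  have w₂ : C.lie q₁ Q₁ α₂ = ((-1 : ℝ) ^ (q₁ * q₂)) • C.contr (C.wedge Q₁ Q₂) ω := by
    have h : C.lie q₁ Q₁ α₂ = C.contr (C.wedge Q₂ Q₁) ω := by
      simp [MultiCtx.lie, z₂, C.contr_wedge, e₂]
    rw [h, C.wedge_comm hQ₁ hQ₂, map_smul, LinearMap.smul_apply]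
  have hs : ∀ n : ℕ, ((-1 : ℝ) ^ n) ≠ 0 := fun n => pow_ne_zero n (by norm_num)
  refine ⟨by rw [w₁, MultiCtx.bracket], ?_, ?_⟩
  · rw [w₁, MultiCtx.bracket, smul_eq_zero_iff_right (hs _)]
  · rw [w₂, MultiCtx.bracket, smul_eq_zero_iff_right (hs _), smul_eq_zero_iff_right (hs _)]
end

section
/- Let (M,ω) be a multisymplectic manifold of degree k+1 and let Q₁ ∈ Ω^{q₁}(TM), Q₂ ∈ Ω^{q₂}(TM) be locally Hamiltonian multivector fields (i.e. d(Q₁⌟ω) = 0 and d(Q₂⌟ω) = 0). Then the Schouten–Nijenhuis bracket satisfies [Q₁,Q₂]⌟ω = (−1)^{q₁+q₂+1} d((Q₁∧Q₂)⌟ω); in particular [Q₁,Q₂] is a Hamiltonian (q₁+q₂−1)-multivector field. -/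
variable {Form MVF : Type*} [AddCommGroup Form] [Module ℝ Form]
  [AddCommGroup MVF] [Module ℝ MVF]

theorem schouten_of_locally_hamiltonian
    (C : MultiCtx Form MVF) (k q₁ q₂ : ℕ) (ω : Form)
    (hω : C.IsMultisymplectic k ω)
    (hq₁ : 1 ≤ q₁) (hq₂ : 1 ≤ q₂)
    (Q₁ Q₂ : MVF) (hQ₁ : Q₁ ∈ C.mvfOfDeg q₁) (hQ₂ : Q₂ ∈ C.mvfOfDeg q₂)
    (hlH₁ : C.d (C.contr Q₁ ω) = 0) (hlH₂ : C.d (C.contr Q₂ ω) = 0) :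
    C.contr (C.sn Q₁ Q₂) ω
        = ((-1 : ℝ) ^ (q₁ + q₂ + 1)) • C.d (C.contr (C.wedge Q₁ Q₂) ω) ∧
    C.sn Q₁ Q₂ ∈ C.mvfOfDeg (q₁ + q₂ - 1) ∧
    ∃ β ∈ C.formOfDeg (k + 1 - (q₁ + q₂)), C.contr (C.sn Q₁ Q₂) ω = C.d β := by
  have hmain : C.contr (C.sn Q₁ Q₂) ω
      = ((-1 : ℝ) ^ (q₁ + q₂ + 1)) • C.d (C.contr (C.wedge Q₁ Q₂) ω) := by
    have hsq : ((-1 : ℝ) ^ (q₁ * q₂)) * ((-1 : ℝ) ^ (q₁ * q₂)) = 1 := by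
      rw [← mul_pow]; simp
    rw [C.sn_contr hQ₁ hQ₂ ω, hlH₁, hlH₂, hω.2.1, ← C.contr_wedge Q₂ Q₁ ω,
      C.wedge_comm hQ₁ hQ₂]
    simp only [map_smul, LinearMap.smul_apply, map_zero, smul_zero, sub_zero, zero_sub,
      smul_neg, smul_smul]
    rw [← neg_smul]
    congr 1
    simp only [pow_add, pow_one]
    linear_combination (-((-1 : ℝ) ^ q₁ * (-1 : ℝ) ^ q₂)) * hsq
  refine ⟨hmain, C.sn_mem hQ₁ hQ₂, C.bracket ω q₁ q₂ Q₁ Q₂, ?_, ?_⟩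
  · exact Submodule.smul_mem _ _ (C.contr_mem (C.wedge_mem hQ₁ hQ₂) hω.1)
  · rw [hmain, MultiCtx.bracket, map_smul]
end

section
/- The linear map Λ²(ℝ⁷) → Λ²((ℝ⁷)*) sending a 2-multivector Q to the 2-form Q⌟⋆φ₀ is a bijection. Explicitly, writing Λ²((ℝ⁷)*) = Λ²₇ ⊕ Λ²₁₄ where Λ²₇ = {β : ⋆(φ₀∧β) = 2β} and Λ²₁₄ = {β : ⋆(φ₀∧β) = −β}, every 2-form β = β₇ + β₁₄ equals ((1/2)β₇^♯ − β₁₄^♯)⌟⋆φ₀, where ♯ is the Euclidean metric isomorphism from 2-forms to 2-multivectors. -/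
/-!
STATEMENT 11: The linear map `Λ²(ℝ⁷) → Λ²((ℝ⁷)*)`, `Q ↦ Q ⌟ ⋆φ₀`, is a bijection.
Explicitly, writing `Λ²((ℝ⁷)*) = Λ²₇ ⊕ Λ²₁₄` where `Λ²₇ = {β : ⋆(φ₀ ∧ β) = 2β}` and
`Λ²₁₄ = {β : ⋆(φ₀ ∧ β) = −β}`, every 2-form `β = β₇ + β₁₄` equals
`((1/2) β₇♯ − β₁₄♯) ⌟ ⋆φ₀`, where `♯` is the Euclidean metric isomorphism from 2-forms to
2-multivectors.

Here 2-multivectors `Q = Σ_{i<j} a i j • eᵢ ∧ eⱼ` are represented by antisymmetric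
coefficient matrices `a`; the operator `β ↦ ⋆(φ₀ ∧ β)` is written out via the standard
coordinate formulas for the wedge product and the Euclidean Hodge star:
`⋆γ = (1/(5!·2!)) Σ_{σ ∈ S₇} sgn σ · γ(e_{σ1}, …, e_{σ5}) e^{σ6} ∧ e^{σ7}` for a 5-form `γ`
and `(φ₀ ∧ β)(v₁, …, v₅) = (1/(3!·2!)) Σ_{τ ∈ S₅} sgn τ · φ₀(v_{τ1}, v_{τ2}, v_{τ3}) β(v_{τ4}, v_{τ5})`.
-/

noncomputable section

open scoped BigOperators Matrix

/-- `ℝ⁷`. -/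
abbrev V7 : Type := Fin 7 → ℝ

/-- The basis exterior `k`-form `e^{i₁ ⋯ i_k}` on `ℝ⁷`. -/
def eForm {k : ℕ} (idx : Fin k → Fin 7) : AlternatingMap ℝ V7 ℝ (Fin k) :=
  (Matrix.detRowAlternating (R := ℝ) (n := Fin k)).compLinearMap
    (LinearMap.pi fun t => LinearMap.proj (idx t))

/-- The standard `G₂` 3-form `φ₀` (0-based indices). -/
def phi0 : AlternatingMap ℝ V7 ℝ (Fin 3) :=
  eForm ![0, 1, 2] + eForm ![0, 3, 4] + eForm ![0, 5, 6] + eForm ![1, 3, 5]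
    - eForm ![1, 4, 6] - eForm ![2, 3, 6] - eForm ![2, 4, 5]

/-- The Hodge dual 4-form `⋆φ₀` (0-based indices). -/
def psi0 : AlternatingMap ℝ V7 ℝ (Fin 4) :=
  eForm ![3, 4, 5, 6] + eForm ![1, 2, 5, 6] + eForm ![1, 2, 3, 4] + eForm ![0, 2, 4, 6]
    - eForm ![0, 2, 3, 5] - eForm ![0, 1, 4, 5] - eForm ![0, 1, 3, 6]

/-- The `i`-th standard basis vector of `ℝ⁷`. -/
def e7 (i : Fin 7) : V7 := Pi.single i 1

/-- Contraction `Q ⌟ α` of an `(l+2)`-form `α` by the 2-multivector with antisymmetric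
coefficient matrix `a`; `(X ∧ Y) ⌟ α = Y ⌟ X ⌟ α = α (X, Y, ·, …, ·)`. -/
def contr2 {l : ℕ} (a : Matrix (Fin 7) (Fin 7) ℝ) (α : AlternatingMap ℝ V7 ℝ (Fin (l + 2))) :
    AlternatingMap ℝ V7 ℝ (Fin l) :=
  (1 / 2 : ℝ) • ∑ i : Fin 7, ∑ j : Fin 7, a i j • ((α.curryLeft (e7 i)).curryLeft (e7 j))

/-- The space `Λ²(ℝ⁷)` of 2-multivectors on `ℝ⁷`, realized as antisymmetric `7 × 7` real
matrices (`a i j` is the coefficient of `eᵢ ∧ eⱼ`). -/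
def skew7 : Submodule ℝ (Matrix (Fin 7) (Fin 7) ℝ) where
  carrier := {a | aᵀ = -a}
  add_mem' := by
    intro a b ha hb
    simp only [Set.mem_setOf_eq] at *
    rw [Matrix.transpose_add, ha, hb, neg_add]
  zero_mem' := by simp
  smul_mem' := by
    intro c a ha
    simp only [Set.mem_setOf_eq] at *
    rw [Matrix.transpose_smul, ha, smul_neg]

/-- The Euclidean musical isomorphism `♯` from 2-forms to 2-multivectors: `β♯` has
coefficient matrix `(β (eᵢ, eⱼ))ᵢⱼ`. -/
def sharp2 (β : AlternatingMap ℝ V7 ℝ (Fin 2)) : Matrix (Fin 7) (Fin 7) ℝ :=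
  Matrix.of fun i j => β ![e7 i, e7 j]

/-- The evaluation `(φ₀ ∧ β)(v₁, …, v₅)` of the wedge product of `φ₀` with a 2-form `β`. -/
def phiWedgeEval (β : AlternatingMap ℝ V7 ℝ (Fin 2)) (v : Fin 5 → V7) : ℝ :=
  (1 / 12 : ℝ) * ∑ τ : Equiv.Perm (Fin 5), ((Equiv.Perm.sign τ : ℤ) : ℝ) *
    (phi0 ![v (τ 0), v (τ 1), v (τ 2)]) * (β ![v (τ 3), v (τ 4)])

/-- The 2-form `⋆(φ₀ ∧ β)`, via the coordinate formula for the Euclidean Hodge star of the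
5-form `φ₀ ∧ β`. -/
def starPhiWedge (β : AlternatingMap ℝ V7 ℝ (Fin 2)) : AlternatingMap ℝ V7 ℝ (Fin 2) :=
  (1 / 240 : ℝ) • ∑ σ : Equiv.Perm (Fin 7),
    (((Equiv.Perm.sign σ : ℤ) : ℝ) *
        phiWedgeEval β (fun t : Fin 5 => e7 (σ (Fin.castLE (by omega) t)))) •
      eForm ![σ 5, σ 6]


/-- Reindexing an alternating sum over `S₇` by a permutation of a subset of the indices. -/
lemma alt_sum_reindex {n : ℕ} (ι : Fin n ↪ Fin 7) (F : Equiv.Perm (Fin 7) → ℝ) :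
    ∑ σ : Equiv.Perm (Fin 7), ∑ τ : Equiv.Perm (Fin n),
      ((Equiv.Perm.sign σ : ℤ) : ℝ) * (((Equiv.Perm.sign τ : ℤ) : ℝ) *
        F (σ * τ.viaFintypeEmbedding ι)) =
      (n.factorial : ℝ) * ∑ σ : Equiv.Perm (Fin 7), ((Equiv.Perm.sign σ : ℤ) : ℝ) * F σ := by
  rw [Finset.sum_comm]
  have h : ∀ τ : Equiv.Perm (Fin n), ∑ σ : Equiv.Perm (Fin 7),
      ((Equiv.Perm.sign σ : ℤ) : ℝ) * (((Equiv.Perm.sign τ : ℤ) : ℝ) *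
        F (σ * τ.viaFintypeEmbedding ι)) =
      ∑ σ : Equiv.Perm (Fin 7), ((Equiv.Perm.sign σ : ℤ) : ℝ) * F σ := by
    intro τ
    rw [← Equiv.sum_comp (Equiv.mulRight (τ.viaFintypeEmbedding ι))
      (fun σ => ((Equiv.Perm.sign σ : ℤ) : ℝ) * F σ)]
    refine Finset.sum_congr rfl fun σ _ => ?_
    simp only [Equiv.coe_mulRight, Equiv.Perm.sign_mul, Equiv.Perm.viaFintypeEmbedding_sign]
    push_cast
    ring
  rw [Finset.sum_congr rfl fun τ _ => h τ]
  simp [Fintype.card_perm]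

/-- The first `n` indices. -/
def initEmb (n : ℕ) (h : n ≤ 7) : Fin n ↪ Fin 7 := Fin.castLEEmb h

lemma via_lt {n : ℕ} (h : n ≤ 7) (τ : Equiv.Perm (Fin n)) (i : Fin n) :
    τ.viaFintypeEmbedding (initEmb n h) (Fin.castLE h i) = Fin.castLE h (τ i) :=
  Equiv.Perm.viaFintypeEmbedding_apply_image τ (initEmb n h) i

lemma via_ge {n : ℕ} (h : n ≤ 7) (τ : Equiv.Perm (Fin n)) (i : Fin 7) (hi : n ≤ i.val) :
    τ.viaFintypeEmbedding (initEmb n h) i = i := by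
  apply Equiv.Perm.viaFintypeEmbedding_apply_notMem_range
  rintro ⟨j, hj⟩
  have := congrArg Fin.val hj
  simp [initEmb] at this
  omega

lemma eForm_apply {k : ℕ} (q : Fin k → Fin 7) (v : Fin k → V7) :
    eForm q v = ∑ τ : Equiv.Perm (Fin k), ((Equiv.Perm.sign τ : ℤ) : ℝ) *
      ∏ i, v (τ i) (q i) := by
  have : eForm q v = Matrix.det (Matrix.of fun i t => v i (q t)) := rfl
  rw [this, Matrix.det_apply']
  rfl

lemma eForm_apply' {k : ℕ} (q : Fin k → Fin 7) (v : Fin k → V7) :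
    eForm q v = ∑ τ : Equiv.Perm (Fin k), ((Equiv.Perm.sign τ : ℤ) : ℝ) *
      ∏ i, v i (q (τ i)) := by
  have : eForm q v = Matrix.det (Matrix.of fun i t => v i (q t)) := rfl
  rw [this, ← Matrix.det_transpose, Matrix.det_apply']
  rfl

lemma eForm_two (a b : Fin 7) (v w : V7) :
    eForm ![a, b] ![v, w] = v a * w b - v b * w a := by
  have : eForm ![a, b] ![v, w] = Matrix.det (Matrix.of fun i t =>
    (![v, w] : Fin 2 → V7) i ((![a, b] : Fin 2 → Fin 7) t)) := rfl
  rw [this, Matrix.det_fin_two]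
  simp

/-- Collapsing a sum over permutations fixing `0`. -/
lemma sum_fix_zero {n : ℕ} (f : Equiv.Perm (Fin (n + 1)) → ℝ) :
    ∑ σ : Equiv.Perm (Fin (n + 1)), (if σ 0 = 0 then f σ else 0) =
      ∑ e : Equiv.Perm (Fin n), f (Equiv.Perm.decomposeFin.symm (0, e)) := by
  rw [← Equiv.sum_comp Equiv.Perm.decomposeFin.symm, Fintype.sum_prod_type]
  rw [Finset.sum_eq_single 0]
  · simp
  · intro b _ hb
    simp [hb]
  · simp

lemma sum_fix_three (f : Equiv.Perm (Fin 7) → ℝ) :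
    ∑ σ : Equiv.Perm (Fin 7), (if σ 0 = 0 then if σ 1 = 1 then if σ 2 = 2 then f σ else 0
      else 0 else 0) =
      ∑ e : Equiv.Perm (Fin 4), f (Equiv.Perm.decomposeFin.symm (0,
        Equiv.Perm.decomposeFin.symm (0, Equiv.Perm.decomposeFin.symm (0, e)))) := by
  rw [sum_fix_zero]
  have h1 : ∀ e, Equiv.Perm.decomposeFin.symm ((0 : Fin 7), e) 1 = (e 0).succ := fun e => by
    simp
  have h2 : ∀ e, Equiv.Perm.decomposeFin.symm ((0 : Fin 7), e) 2 = (e 1).succ := fun e =>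
    (Equiv.Perm.decomposeFin_symm_apply_succ e 0 1).trans (by simp)
  have h3 : ∀ e, Equiv.Perm.decomposeFin.symm ((0 : Fin 6), e) 1 = (e 0).succ := fun e => by
    simp
  have e1 : ∀ x : Fin 6, x.succ = 1 ↔ x = 0 := by decide
  have e2 : ∀ x : Fin 6, x.succ = 2 ↔ x = 1 := by decide
  have e3 : ∀ x : Fin 5, x.succ = 1 ↔ x = 0 := by decide
  simp only [h1, h2, e1, e2]
  rw [sum_fix_zero]
  simp only [h3, e3]
  rw [sum_fix_zero]

lemma term_sum (a b c : Fin 7) (ρ : Equiv.Perm (Fin 7)) (h0 : ρ 0 = a) (h1 : ρ 1 = b)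
    (h2 : ρ 2 = c) (hs : Equiv.Perm.sign ρ = 1) (H : Fin 7 → Fin 7 → Fin 7 → Fin 7 → ℝ) :
    ∑ σ : Equiv.Perm (Fin 7), ((Equiv.Perm.sign σ : ℤ) : ℝ) *
      (eForm ![a, b, c] ![e7 (σ 0), e7 (σ 1), e7 (σ 2)] * H (σ 3) (σ 4) (σ 5) (σ 6)) =
    6 * ∑ e : Equiv.Perm (Fin 4), ((Equiv.Perm.sign e : ℤ) : ℝ) *
      H (ρ (e 0).succ.succ.succ) (ρ (e 1).succ.succ.succ) (ρ (e 2).succ.succ.succ)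
        (ρ (e 3).succ.succ.succ) := by
  have step1 : ∀ σ : Equiv.Perm (Fin 7), ((Equiv.Perm.sign σ : ℤ) : ℝ) *
      (eForm ![a, b, c] ![e7 (σ 0), e7 (σ 1), e7 (σ 2)] * H (σ 3) (σ 4) (σ 5) (σ 6)) =
      ∑ τ : Equiv.Perm (Fin 3), ((Equiv.Perm.sign σ : ℤ) : ℝ) * (((Equiv.Perm.sign τ : ℤ) : ℝ) *
        (fun σ : Equiv.Perm (Fin 7) => e7 (σ 0) a * e7 (σ 1) b * e7 (σ 2) c *
          H (σ 3) (σ 4) (σ 5) (σ 6)) (σ * τ.viaFintypeEmbedding (initEmb 3 (by norm_num)))) := by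
    intro σ
    rw [eForm_apply, Finset.sum_mul, Finset.mul_sum]
    refine Finset.sum_congr rfl fun τ _ => ?_
    have g0 := via_lt (by norm_num : 3 ≤ 7) τ 0
    have g1 := via_lt (by norm_num : 3 ≤ 7) τ 1
    have g2 := via_lt (by norm_num : 3 ≤ 7) τ 2
    have g3 := via_ge (by norm_num : 3 ≤ 7) τ 3 (by decide)
    have g4 := via_ge (by norm_num : 3 ≤ 7) τ 4 (by decide)
    have g5 := via_ge (by norm_num : 3 ≤ 7) τ 5 (by decide)
    have g6 := via_ge (by norm_num : 3 ≤ 7) τ 6 (by decide)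
    have hv : ∀ i : Fin 3, (![e7 (σ 0), e7 (σ 1), e7 (σ 2)] : Fin 3 → V7) i =
        e7 (σ (Fin.castLE (by norm_num) i)) := by
      intro i; fin_cases i <;> rfl
    simp only [Fin.castLE_zero] at g0
    have c1 : Fin.castLE (by norm_num : 3 ≤ 7) 1 = 1 := rfl
    have c2 : Fin.castLE (by norm_num : 3 ≤ 7) 2 = 2 := rfl
    rw [c1] at g1
    rw [c2] at g2
    simp only [Equiv.Perm.mul_apply, g0, g1, g2, g3, g4, g5, g6, Fin.prod_univ_three, hv]
    simp only [Matrix.cons_val_zero, Matrix.cons_val_one, Matrix.cons_val]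
    ring
  rw [Finset.sum_congr rfl fun σ _ => step1 σ]
  refine (alt_sum_reindex (initEmb 3 (by norm_num)) (fun σ : Equiv.Perm (Fin 7) =>
    e7 (σ 0) a * e7 (σ 1) b * e7 (σ 2) c * H (σ 3) (σ 4) (σ 5) (σ 6))).trans ?_
  have h6 : ((Nat.factorial 3 : ℕ) : ℝ) = 6 := by norm_num [Nat.factorial]
  rw [h6]
  congr 1
  rw [← Equiv.sum_comp (Equiv.mulLeft ρ)]
  have step2 : ∀ σ : Equiv.Perm (Fin 7),
      ((Equiv.Perm.sign (Equiv.mulLeft ρ σ) : ℤ) : ℝ) *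
        (e7 (Equiv.mulLeft ρ σ 0) a * e7 (Equiv.mulLeft ρ σ 1) b * e7 (Equiv.mulLeft ρ σ 2) c *
          H (Equiv.mulLeft ρ σ 3) (Equiv.mulLeft ρ σ 4) (Equiv.mulLeft ρ σ 5)
            (Equiv.mulLeft ρ σ 6)) =
      if σ 0 = 0 then if σ 1 = 1 then if σ 2 = 2 then
        ((Equiv.Perm.sign σ : ℤ) : ℝ) * H (ρ (σ 3)) (ρ (σ 4)) (ρ (σ 5)) (ρ (σ 6)) else 0
        else 0 else 0 := by
    intro σ
    have he : ∀ i j : Fin 7, e7 (ρ i) (ρ j) = if i = j then 1 else 0 := by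
      intro i j
      simp [e7, Pi.single_apply, eq_comm]
    simp only [Equiv.coe_mulLeft, Equiv.Perm.mul_apply, Equiv.Perm.sign_mul, hs, ← h0, ← h1, ← h2,
      he, one_mul]
    split_ifs <;> simp
  rw [Finset.sum_congr rfl fun σ _ => step2 σ, sum_fix_three]
  refine Finset.sum_congr rfl fun e _ => ?_
  have d : ∀ (n : ℕ) (e : Equiv.Perm (Fin n)) (x : Fin n),
      Equiv.Perm.decomposeFin.symm (0, e) x.succ = (e x).succ := by
    intro n e x
    simp
  have t0 : (3 : Fin 7) = (0 : Fin 4).succ.succ.succ := rfl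
  have t1 : (4 : Fin 7) = (1 : Fin 4).succ.succ.succ := rfl
  have t2 : (5 : Fin 7) = (2 : Fin 4).succ.succ.succ := rfl
  have t3 : (6 : Fin 7) = (3 : Fin 4).succ.succ.succ := rfl
  rw [t0, t1, t2, t3]
  simp only [d, Equiv.Perm.decomposeFin.symm_sign, if_true, one_mul]

lemma alt_sum_apply {ι : Type*} {k : ℕ} (s : Finset ι) (f : ι → AlternatingMap ℝ V7 ℝ (Fin k))
    (v : Fin k → V7) : (∑ i ∈ s, f i) v = ∑ i ∈ s, f i v := by
  classical
  induction s using Finset.induction_on with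
  | empty => simp
  | insert a s ha ih => rw [Finset.sum_insert ha, Finset.sum_insert ha, AlternatingMap.add_apply, ih]

lemma contr2_eForm (B : Matrix (Fin 7) (Fin 7) ℝ) (q : Fin 4 → Fin 7) (v w : V7) :
    contr2 B (eForm q) ![v, w] = (1 / 2 : ℝ) * ∑ e : Equiv.Perm (Fin 4),
      ((Equiv.Perm.sign e : ℤ) : ℝ) * (B (q (e 0)) (q (e 1)) * (v (q (e 2)) * w (q (e 3)))) := by
  have hL : contr2 B (eForm q) ![v, w] = (1 / 2 : ℝ) * ∑ i, ∑ j, B i j *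
      eForm q ![e7 i, e7 j, v, w] := by
    simp only [contr2, AlternatingMap.smul_apply, alt_sum_apply, smul_eq_mul, AlternatingMap.curryLeft_apply_apply,
      Matrix.vecCons]
  rw [hL]
  congr 1
  simp only [eForm_apply', Finset.mul_sum]
  rw [Finset.sum_congr rfl fun i _ => Finset.sum_comm, Finset.sum_comm]
  refine Finset.sum_congr rfl fun e _ => ?_
  simp only [Fin.prod_univ_four, Matrix.cons_val_zero, Matrix.cons_val_one, Matrix.cons_val]
  rw [Finset.sum_eq_single (q (e 0))]
  · rw [Finset.sum_eq_single (q (e 1))]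
    · simp [e7]; ring
    · intro j _ hj
      simp [e7, Pi.single_apply, Ne.symm hj]
    · simp
  · intro i _ hi
    simp [e7, Pi.single_apply, Ne.symm hi]
  · simp

lemma sum_perm_four (f : Fin 4 → Fin 4 → Fin 4 → Fin 4 → ℝ) :
    ∑ e : Equiv.Perm (Fin 4), ((Equiv.Perm.sign e : ℤ) : ℝ) * f (e 0) (e 1) (e 2) (e 3) =
    f 0 1 2 3 - f 0 1 3 2 - f 0 2 1 3 + f 0 2 3 1 + f 0 3 1 2 - f 0 3 2 1
    - f 1 0 2 3 + f 1 0 3 2 + f 1 2 0 3 - f 1 2 3 0 - f 1 3 0 2 + f 1 3 2 0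
    + f 2 0 1 3 - f 2 0 3 1 - f 2 1 0 3 + f 2 1 3 0 + f 2 3 0 1 - f 2 3 1 0
    - f 3 0 1 2 + f 3 0 2 1 + f 3 1 0 2 - f 3 1 2 0 - f 3 2 0 1 + f 3 2 1 0 := by
  have c : ∀ (e : Equiv.Perm (Fin 3)) p,
      Equiv.Perm.decomposeFin.symm ((p : Fin 4), e) 2 = Equiv.swap 0 p (e 1).succ :=
    fun e p => Equiv.Perm.decomposeFin_symm_apply_succ e p 1
  have c' : ∀ (e : Equiv.Perm (Fin 3)) p,
      Equiv.Perm.decomposeFin.symm ((p : Fin 4), e) 3 = Equiv.swap 0 p (e 2).succ :=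
    fun e p => Equiv.Perm.decomposeFin_symm_apply_succ e p 2
  have c3 : ∀ (e : Equiv.Perm (Fin 2)) p,
      Equiv.Perm.decomposeFin.symm ((p : Fin 3), e) 2 = Equiv.swap 0 p (e 1).succ :=
    fun e p => Equiv.Perm.decomposeFin_symm_apply_succ e p 1
  rw [← Equiv.sum_comp Equiv.Perm.decomposeFin.symm, Fintype.sum_prod_type]
  simp only [← Equiv.sum_comp (Equiv.Perm.decomposeFin (n := 2)).symm,
    ← Equiv.sum_comp (Equiv.Perm.decomposeFin (n := 1)).symm, Fintype.sum_prod_type,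
    Equiv.Perm.decomposeFin.symm_sign, Equiv.Perm.decomposeFin_symm_apply_zero,
    Equiv.Perm.decomposeFin_symm_apply_one, c, c', c3, Fin.sum_univ_four, Fin.sum_univ_three,
    Fin.sum_univ_two, Finset.univ_unique, Finset.sum_singleton]
  simp [Equiv.swap_apply_def]
  ring

lemma term_contr (β : AlternatingMap ℝ V7 ℝ (Fin 2)) (v w : V7) (a b c : Fin 7) (q : Fin 4 → Fin 7)
    (ρ : Equiv.Perm (Fin 7)) (h0 : ρ 0 = a) (h1 : ρ 1 = b) (h2 : ρ 2 = c)
    (hq : ∀ i : Fin 4, ρ i.succ.succ.succ = q i) (hs : Equiv.Perm.sign ρ = 1) :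
    ∑ σ : Equiv.Perm (Fin 7), ((Equiv.Perm.sign σ : ℤ) : ℝ) *
      (eForm ![a, b, c] ![e7 (σ 0), e7 (σ 1), e7 (σ 2)] *
        (β ![e7 (σ 3), e7 (σ 4)] * (v (σ 5) * w (σ 6) - v (σ 6) * w (σ 5)))) =
    24 * contr2 (sharp2 β) (eForm q) ![v, w] := by
  rw [term_sum a b c ρ h0 h1 h2 hs
    (fun x y z t => β ![e7 x, e7 y] * (v z * w t - v t * w z)), contr2_eForm]
  simp only [hq]
  rw [sum_perm_four (fun x y z t => β ![e7 (q x), e7 (q y)] *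
    (v (q z) * w (q t) - v (q t) * w (q z))),
    sum_perm_four (fun x y z t => sharp2 β (q x) (q y) * (v (q z) * w (q t)))]
  simp only [sharp2, Matrix.of_apply]
  ring

lemma alt_smul_sum_apply {ι : Type*} {k : ℕ} (s : Finset ι) (c : ℝ) (g : ι → ℝ)
    (f : ι → AlternatingMap ℝ V7 ℝ (Fin k)) (v : Fin k → V7) :
    (c • ∑ i ∈ s, g i • f i) v = c * ∑ i ∈ s, g i * f i v := by
  rw [AlternatingMap.smul_apply, alt_sum_apply]
  rfl

lemma starPhiWedge_unfold (β : AlternatingMap ℝ V7 ℝ (Fin 2)) (v w : V7) (h : 5 ≤ 7) :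
    ∃ U : Equiv.Perm (Fin 7) → Fin 5 → V7, (∀ σ t, U σ t = e7 (σ (Fin.castLE h t))) ∧
    starPhiWedge β ![v, w] = (1 / 240 : ℝ) * ∑ σ : Equiv.Perm (Fin 7),
      ((Equiv.Perm.sign σ : ℤ) : ℝ) * phiWedgeEval β (U σ) * eForm ![σ 5, σ 6] ![v, w] := by
  refine ⟨fun σ t => e7 (σ (Fin.castLE h t)), fun σ t => rfl, ?_⟩
  delta starPhiWedge
  beta_reduce
  generalize (Finset.univ : Finset (Equiv.Perm (Fin 7))) = s
  revert s
  refine id ?_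
  intro s
  exact alt_smul_sum_apply s (1 / 240 : ℝ) _ _ _

lemma wedge_term (β : AlternatingMap ℝ V7 ℝ (Fin 2)) (v w : V7) (σ : Equiv.Perm (Fin 7))
    (τ : Equiv.Perm (Fin 5)) (h : 5 ≤ 7) (F : Equiv.Perm (Fin 7) → ℝ)
    (hF : ∀ σ : Equiv.Perm (Fin 7), F σ = phi0 ![e7 (σ 0), e7 (σ 1), e7 (σ 2)] *
        (β ![e7 (σ 3), e7 (σ 4)] * (v (σ 5) * w (σ 6) - v (σ 6) * w (σ 5)))) :
    F (σ * τ.viaFintypeEmbedding (initEmb 5 h)) =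
      phi0 ![e7 (σ (Fin.castLE h (τ 0))), e7 (σ (Fin.castLE h (τ 1))),
        e7 (σ (Fin.castLE h (τ 2)))] *
        (β ![e7 (σ (Fin.castLE h (τ 3))), e7 (σ (Fin.castLE h (τ 4)))] *
          (v (σ 5) * w (σ 6) - v (σ 6) * w (σ 5))) := by
  have g0 := via_lt h τ 0
  have g1 := via_lt h τ 1
  have g2 := via_lt h τ 2
  have g3 := via_lt h τ 3
  have g4 := via_lt h τ 4
  have c0 : Fin.castLE h 0 = 0 := rfl
  have c1 : Fin.castLE h 1 = 1 := rfl
  have c2 : Fin.castLE h 2 = 2 := rfl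
  have c3 : Fin.castLE h 3 = 3 := rfl
  have c4 : Fin.castLE h 4 = 4 := rfl
  rw [c0] at g0
  rw [c1] at g1
  rw [c2] at g2
  rw [c3] at g3
  rw [c4] at g4
  have g5 := via_ge h τ 5 (by decide)
  have g6 := via_ge h τ 6 (by decide)
  simp only [hF, Equiv.Perm.mul_apply, g0, g1, g2, g3, g4, g5, g6]

lemma starPhiWedge_apply (β : AlternatingMap ℝ V7 ℝ (Fin 2)) (v w : V7) :
    starPhiWedge β ![v, w] = (1 / 24 : ℝ) *
      ∑ σ : Equiv.Perm (Fin 7), ((Equiv.Perm.sign σ : ℤ) : ℝ) *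
      (phi0 ![e7 (σ 0), e7 (σ 1), e7 (σ 2)] *
        (β ![e7 (σ 3), e7 (σ 4)] * (v (σ 5) * w (σ 6) - v (σ 6) * w (σ 5)))) := by
  obtain ⟨F, hF⟩ : ∃ F : Equiv.Perm (Fin 7) → ℝ, ∀ σ, F σ =
      phi0 ![e7 (σ 0), e7 (σ 1), e7 (σ 2)] *
        (β ![e7 (σ 3), e7 (σ 4)] * (v (σ 5) * w (σ 6) - v (σ 6) * w (σ 5))) :=
    ⟨_, fun _ => rfl⟩
  have h57 : 5 ≤ 7 := by norm_num
  have key := alt_sum_reindex (initEmb 5 h57) F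
  simp only [← hF]
  have h120 : ((Nat.factorial 5 : ℕ) : ℝ) = 120 := by norm_num [Nat.factorial]
  rw [h120] at key
  obtain ⟨U, hU, hstar⟩ := starPhiWedge_unfold β v w h57
  have main : ∑ σ : Equiv.Perm (Fin 7), ((Equiv.Perm.sign σ : ℤ) : ℝ) *
        phiWedgeEval β (U σ) * eForm ![σ 5, σ 6] ![v, w] =
      (1 / 12 : ℝ) * ∑ σ : Equiv.Perm (Fin 7), ∑ τ : Equiv.Perm (Fin 5),
      ((Equiv.Perm.sign σ : ℤ) : ℝ) * (((Equiv.Perm.sign τ : ℤ) : ℝ) *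
        F (σ * τ.viaFintypeEmbedding (initEmb 5 h57))) := by
    rw [Finset.mul_sum]
    refine Finset.sum_congr rfl fun σ _ => ?_
    simp only [wedge_term β v w σ _ h57 F hF, phiWedgeEval, hU, eForm_two]
    rw [Finset.mul_sum, Finset.mul_sum, Finset.mul_sum, Finset.sum_mul]
    refine Finset.sum_congr rfl fun τ _ => ?_
    ring
  rw [hstar, main, key]
  ring

lemma contr2_add (B : Matrix (Fin 7) (Fin 7) ℝ) (α α' : AlternatingMap ℝ V7 ℝ (Fin 4)) :
    contr2 (l := 2) B (α + α') = contr2 (l := 2) B α + contr2 (l := 2) B α' := by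
  simp [contr2, AlternatingMap.curryLeft_add, Finset.sum_add_distrib, smul_add]

lemma contr2_neg (B : Matrix (Fin 7) (Fin 7) ℝ) (α : AlternatingMap ℝ V7 ℝ (Fin 4)) :
    contr2 (l := 2) B (-α) = -contr2 (l := 2) B α := by
  rw [eq_neg_iff_add_eq_zero, ← contr2_add, neg_add_cancel]
  ext v
  simp [contr2]

lemma contr2_psi0 (B : Matrix (Fin 7) (Fin 7) ℝ) : contr2 B psi0 =
    contr2 (l := 2) B (eForm ![3, 4, 5, 6]) + contr2 (l := 2) B (eForm ![1, 2, 5, 6])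
    + contr2 (l := 2) B (eForm ![1, 2, 3, 4]) + contr2 (l := 2) B (eForm ![0, 2, 4, 6])
    - contr2 (l := 2) B (eForm ![0, 2, 3, 5]) - contr2 (l := 2) B (eForm ![0, 1, 4, 5])
    - contr2 (l := 2) B (eForm ![0, 1, 3, 6]) := by
  simp only [psi0, sub_eq_add_neg, contr2_add, contr2_neg]

/-- A permutation of `Fin 7` given by its values. -/
def mkPerm (f g : Fin 7 → Fin 7) (h : ∀ i, g (f i) = i) (h' : ∀ i, f (g i) = i) :
    Equiv.Perm (Fin 7) := ⟨f, g, h, h'⟩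

lemma starPhiWedge_eq (β : AlternatingMap ℝ V7 ℝ (Fin 2)) :
    starPhiWedge β = contr2 (sharp2 β) psi0 := by
  ext u
  obtain ⟨v, w, rfl⟩ : ∃ v w : V7, u = ![v, w] := ⟨u 0, u 1, by
    ext i; fin_cases i <;> rfl⟩
  rw [starPhiWedge_apply, contr2_psi0]
  have t1 := term_contr β v w 0 1 2 ![3, 4, 5, 6]
    (mkPerm ![0, 1, 2, 3, 4, 5, 6] ![0, 1, 2, 3, 4, 5, 6] (by decide) (by decide))
    rfl rfl rfl (by decide) (by decide +kernel)
  have t2 := term_contr β v w 0 3 4 ![1, 2, 5, 6]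
    (mkPerm ![0, 3, 4, 1, 2, 5, 6] ![0, 3, 4, 1, 2, 5, 6] (by decide) (by decide))
    rfl rfl rfl (by decide) (by decide +kernel)
  have t3 := term_contr β v w 0 5 6 ![1, 2, 3, 4]
    (mkPerm ![0, 5, 6, 1, 2, 3, 4] ![0, 3, 4, 5, 6, 1, 2] (by decide) (by decide))
    rfl rfl rfl (by decide) (by decide +kernel)
  have t4 := term_contr β v w 1 3 5 ![0, 2, 4, 6]
    (mkPerm ![1, 3, 5, 0, 2, 4, 6] ![3, 0, 4, 1, 5, 2, 6] (by decide) (by decide))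
    rfl rfl rfl (by decide) (by decide +kernel)
  have t5 := term_contr β v w 1 4 6 ![0, 2, 3, 5]
    (mkPerm ![1, 4, 6, 0, 2, 3, 5] ![3, 0, 4, 5, 1, 6, 2] (by decide) (by decide))
    rfl rfl rfl (by decide) (by decide +kernel)
  have t6 := term_contr β v w 2 3 6 ![0, 1, 4, 5]
    (mkPerm ![2, 3, 6, 0, 1, 4, 5] ![3, 4, 0, 1, 5, 6, 2] (by decide) (by decide))
    rfl rfl rfl (by decide) (by decide +kernel)
  have t7 := term_contr β v w 2 4 5 ![0, 1, 3, 6]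
    (mkPerm ![2, 4, 5, 0, 1, 3, 6] ![3, 4, 0, 5, 1, 2, 6] (by decide) (by decide))
    rfl rfl rfl (by decide) (by decide +kernel)
  simp only [phi0, AlternatingMap.add_apply, AlternatingMap.sub_apply, add_mul, sub_mul, mul_add,
    mul_sub, Finset.sum_add_distrib, Finset.sum_sub_distrib] at t1 t2 t3 t4 t5 t6 t7 ⊢
  linarith

lemma contr2_eForm_skew (B : Matrix (Fin 7) (Fin 7) ℝ) (hB : ∀ i j, B j i = -B i j)
    (a b c d : Fin 7) (v w : V7) :
    contr2 (l := 2) B (eForm ![a, b, c, d]) ![v, w] =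
      B a b * (v c * w d - v d * w c) - B a c * (v b * w d - v d * w b)
      + B a d * (v b * w c - v c * w b) + B b c * (v a * w d - v d * w a)
      - B b d * (v a * w c - v c * w a) + B c d * (v a * w b - v b * w a) := by
  rw [contr2_eForm, sum_perm_four (fun x y z t => B (![a, b, c, d] x) (![a, b, c, d] y) *
    (v (![a, b, c, d] z) * w (![a, b, c, d] t)))]
  simp only [Matrix.cons_val_zero, Matrix.cons_val_one, Matrix.cons_val]
  rw [hB a b, hB a c, hB a d, hB b c, hB b d, hB c d]
  ring

/-- The operator on coefficient matrices. -/
def opL (B : Matrix (Fin 7) (Fin 7) ℝ) : Matrix (Fin 7) (Fin 7) ℝ := sharp2 (contr2 B psi0)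

lemma sharp2_skew (β : AlternatingMap ℝ V7 ℝ (Fin 2)) (i j : Fin 7) :
    sharp2 β j i = -sharp2 β i j := by
  have h := β.map_swap ![e7 i, e7 j] (show (0 : Fin 2) ≠ 1 by decide)
  have : (![e7 i, e7 j] : Fin 2 → V7) ∘ (Equiv.swap (0 : Fin 2) 1) = ![e7 j, e7 i] := by
    ext k; fin_cases k <;> rfl
  rw [this] at h
  exact h

lemma sharp2_injective {β γ : AlternatingMap ℝ V7 ℝ (Fin 2)} (h : sharp2 β = sharp2 γ) :
    β = γ := by
  refine Module.Basis.ext_alternating (Pi.basisFun ℝ (Fin 7)) fun v _ => ?_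
  have hv : (fun i => Pi.basisFun ℝ (Fin 7) (v i)) = ![e7 (v 0), e7 (v 1)] := by
    ext k; fin_cases k <;> simp [e7]
  rw [hv]
  exact congrFun (congrFun h (v 0)) (v 1)

lemma opL_apply (B : Matrix (Fin 7) (Fin 7) ℝ) (hB : ∀ i j, B j i = -B i j) :
    opL B 0 1 = -B 4 5 - B 3 6 ∧ opL B 0 2 = B 4 6 - B 3 5 ∧ opL B 0 3 = B 2 5 + B 1 6 ∧
    opL B 0 4 = B 1 5 - B 2 6 ∧ opL B 0 5 = -B 2 3 - B 1 4 ∧ opL B 0 6 = B 2 4 - B 1 3 ∧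
    opL B 1 2 = B 5 6 + B 3 4 ∧ opL B 1 3 = -B 2 4 - B 0 6 ∧ opL B 1 4 = B 2 3 - B 0 5 ∧
    opL B 1 5 = -B 2 6 + B 0 4 ∧ opL B 1 6 = B 2 5 + B 0 3 ∧
    opL B 2 3 = B 1 4 - B 0 5 ∧ opL B 2 4 = -B 1 3 + B 0 6 ∧ opL B 2 5 = B 1 6 + B 0 3 ∧
    opL B 2 6 = -B 1 5 - B 0 4 ∧ opL B 3 4 = B 5 6 + B 1 2 ∧ opL B 3 5 = -B 4 6 - B 0 2 ∧
    opL B 3 6 = B 4 5 - B 0 1 ∧ opL B 4 5 = B 3 6 - B 0 1 ∧ opL B 4 6 = -B 3 5 + B 0 2 ∧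
    opL B 5 6 = B 3 4 + B 1 2 := by
  have h : ∀ i j, opL B i j = contr2 B psi0 ![e7 i, e7 j] := fun _ _ => rfl
  simp only [h, contr2_psi0, AlternatingMap.add_apply, AlternatingMap.sub_apply,
    contr2_eForm_skew B hB, e7]
  refine ⟨?_, ?_, ?_, ?_, ?_, ?_, ?_, ?_, ?_, ?_, ?_, ?_, ?_, ?_, ?_, ?_, ?_, ?_, ?_, ?_, ?_⟩ <;>
    simp <;> ring

lemma opL_skew (B : Matrix (Fin 7) (Fin 7) ℝ) (i j : Fin 7) : opL B j i = -opL B i j :=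
  sharp2_skew _ i j

lemma skew_ext {A B : Matrix (Fin 7) (Fin 7) ℝ} (hA : ∀ i j, A j i = -A i j)
    (hB : ∀ i j, B j i = -B i j) (h : ∀ i j, i < j → A i j = B i j) : A = B := by
  ext i j
  rcases lt_trichotomy i j with hij | hij | hij
  · exact h i j hij
  · subst hij
    have h1 := hA i i
    have h2 := hB i i
    linarith
  · rw [hA j i, hB j i, h j i hij]

lemma opL_opL (B : Matrix (Fin 7) (Fin 7) ℝ) (hB : ∀ i j, B j i = -B i j) :
    opL (opL B) = opL B + (2 : ℝ) • B := by
  refine skew_ext (opL_skew _) (fun i j => ?_) ?_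
  · simp only [Matrix.add_apply, Matrix.smul_apply, smul_eq_mul]
    rw [opL_skew B i j, hB i j]
    ring
  · obtain ⟨a1, a2, a3, a4, a5, a6, a7, a8, a9, a10, a11, a12, a13, a14, a15, a16, a17, a18, a19,
      a20, a21⟩ := opL_apply B hB
    obtain ⟨b1, b2, b3, b4, b5, b6, b7, b8, b9, b10, b11, b12, b13, b14, b15, b16, b17, b18, b19,
      b20, b21⟩ := opL_apply (opL B) (opL_skew B)
    intro i j hij
    simp only [Matrix.add_apply, Matrix.smul_apply, smul_eq_mul]
    fin_cases i <;> fin_cases j <;> first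
      | (exfalso; revert hij; decide)
      | (simp only [Fin.zero_eta, Fin.mk_one, Fin.reduceFinMk]; linarith)

lemma contr2_add_left (A B : Matrix (Fin 7) (Fin 7) ℝ) :
    contr2 (A + B) psi0 = contr2 A psi0 + contr2 B psi0 := by
  simp [contr2, add_smul, Finset.sum_add_distrib]

lemma contr2_smul_left (c : ℝ) (B : Matrix (Fin 7) (Fin 7) ℝ) :
    contr2 (c • B) psi0 = c • contr2 B psi0 := by
  simp only [contr2, Matrix.smul_apply, smul_eq_mul, mul_smul, ← Finset.smul_sum]
  rw [smul_comm]

lemma sharp2_add (β γ : AlternatingMap ℝ V7 ℝ (Fin 2)) :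
    sharp2 (β + γ) = sharp2 β + sharp2 γ := by
  ext i j; simp [sharp2]

lemma sharp2_smul (c : ℝ) (β : AlternatingMap ℝ V7 ℝ (Fin 2)) :
    sharp2 (c • β) = c • sharp2 β := by
  ext i j; simp [sharp2]

lemma spw_star (β : AlternatingMap ℝ V7 ℝ (Fin 2)) :
    starPhiWedge (starPhiWedge β) = starPhiWedge β + (2 : ℝ) • β := by
  apply sharp2_injective
  rw [sharp2_add, sharp2_smul, starPhiWedge_eq, starPhiWedge_eq]
  exact opL_opL _ (sharp2_skew β)

lemma spw_add (β γ : AlternatingMap ℝ V7 ℝ (Fin 2)) :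
    starPhiWedge (β + γ) = starPhiWedge β + starPhiWedge γ := by
  rw [starPhiWedge_eq, sharp2_add, contr2_add_left, ← starPhiWedge_eq, ← starPhiWedge_eq]

lemma spw_smul (c : ℝ) (β : AlternatingMap ℝ V7 ℝ (Fin 2)) :
    starPhiWedge (c • β) = c • starPhiWedge β := by
  rw [starPhiWedge_eq, sharp2_smul, contr2_smul_left, ← starPhiWedge_eq]

/-- The contraction map `Λ²(ℝ⁷) → Λ²((ℝ⁷)*)`, `Q ↦ Q ⌟ ⋆φ₀`, is a bijection; moreover,
writing any 2-form `β` as `β = β₇ + β₁₄` with `β₇ ∈ Λ²₇ = {β : ⋆(φ₀ ∧ β) = 2β}` and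
`β₁₄ ∈ Λ²₁₄ = {β : ⋆(φ₀ ∧ β) = −β}` (such a decomposition always exists), one has
`β = ((1/2) β₇♯ − β₁₄♯) ⌟ ⋆φ₀`. -/
theorem contraction_psi0_bijective_and_decomposition :
    (Function.Bijective fun a : skew7 => contr2 (a : Matrix (Fin 7) (Fin 7) ℝ) psi0) ∧
    (∀ β : AlternatingMap ℝ V7 ℝ (Fin 2),
      ∃ β₇ β₁₄ : AlternatingMap ℝ V7 ℝ (Fin 2),
        starPhiWedge β₇ = (2 : ℝ) • β₇ ∧ starPhiWedge β₁₄ = -β₁₄ ∧ β = β₇ + β₁₄) ∧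
    (∀ β β₇ β₁₄ : AlternatingMap ℝ V7 ℝ (Fin 2),
      starPhiWedge β₇ = (2 : ℝ) • β₇ → starPhiWedge β₁₄ = -β₁₄ → β = β₇ + β₁₄ →
        β = contr2 ((1 / 2 : ℝ) • sharp2 β₇ - sharp2 β₁₄) psi0) := by
  refine ⟨⟨?_, ?_⟩, ?_, ?_⟩
  · rintro ⟨a, ha⟩ ⟨b, hb⟩ hab
    have ha' : ∀ i j, a j i = -a i j := fun i j => congrFun (congrFun ha i) j
    have hb' : ∀ i j, b j i = -b i j := fun i j => congrFun (congrFun hb i) j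
    have hL : opL a = opL b := congrArg sharp2 hab
    have h1 := opL_opL a ha'
    have h2 := opL_opL b hb'
    rw [hL, h2] at h1
    have h3 := add_left_cancel h1
    exact Subtype.ext (smul_right_injective _ (two_ne_zero' ℝ) h3).symm
  · intro β
    refine ⟨⟨sharp2 ((1 / 2 : ℝ) • (starPhiWedge β + (-1 : ℝ) • β)), ?_⟩, ?_⟩
    · ext i j
      exact sharp2_skew ((1 / 2 : ℝ) • (starPhiWedge β + (-1 : ℝ) • β)) i j
    · change contr2 (sharp2 _) psi0 = β
      rw [← starPhiWedge_eq, spw_smul, spw_add, spw_smul, spw_star]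
      module
  · intro β
    refine ⟨(1 / 3 : ℝ) • (starPhiWedge β + β), (1 / 3 : ℝ) • ((2 : ℝ) • β +
      (-1 : ℝ) • starPhiWedge β), ?_, ?_, ?_⟩
    · rw [spw_smul, spw_add, spw_star]
      module
    · rw [spw_smul, spw_add, spw_smul, spw_smul, spw_star]
      module
    · module
  · intro β β₇ β₁₄ h7 h14 hβ
    have : (1 / 2 : ℝ) • sharp2 β₇ - sharp2 β₁₄ =
        sharp2 ((1 / 2 : ℝ) • β₇ + (-1 : ℝ) • β₁₄) := by
      rw [sharp2_add, sharp2_smul, sharp2_smul]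
      module
    rw [this, ← starPhiWedge_eq, spw_add, spw_smul, spw_smul, h7, h14, hβ]
    module

end
end

section
/- For every 2-multivector Q ∈ Λ²(ℝ⁷): (Q⌟⋆φ₀)∧(Q⌟φ₀)∧⋆φ₀ = 2|Q⌟φ₀|² vol, where vol = e¹∧⋯∧e⁷ is the standard volume form and |·| is the Euclidean norm on 1-forms. (Pointwise, the same identity (Q⌟⋆φ)∧(Q⌟φ)∧⋆φ = 2|Q⌟φ|²_φ Vol_φ holds for any 2-multivector field Q on a manifold with G₂-structure φ.) -/
/-!
STATEMENT 17: For every 2-multivector `Q ∈ Λ²(ℝ⁷)`: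
`(Q ⌟ ⋆φ₀) ∧ (Q ⌟ φ₀) ∧ ⋆φ₀ = 2 |Q ⌟ φ₀|² vol`,
where `vol = e¹ ∧ ⋯ ∧ e⁷` and `|·|` is the Euclidean norm on 1-forms.

A 2-multivector `Q = Σ_{i<j} a i j • eᵢ ∧ eⱼ` is represented by its antisymmetric
coefficient matrix `a`; contraction is `(v₁ ∧ v₂) ⌟ α = v₂ ⌟ v₁ ⌟ α`, extended linearly.
Since a 7-form on `ℝ⁷` is determined by its value on `(e₁, …, e₇)` and
`vol (e₁, …, e₇) = 1`, the identity of 7-forms is expressed by evaluating both sides on the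
standard basis; the wedge product `(β ∧ γ ∧ δ) (e₁, …, e₇)` of a 2-form `β`, a 1-form `γ`
and a 4-form `δ` is given by the standard alternation sum
`(1/(2!·1!·4!)) Σ_{σ ∈ S₇} sgn σ · β(e_{σ1}, e_{σ2}) · γ(e_{σ3}) · δ(e_{σ4}, …, e_{σ7})`.
-/

noncomputable section

open scoped BigOperators Matrix

/-- The value `(β ∧ γ ∧ δ) (e₁, …, e₇)` of the wedge product of a 2-form `β`, a 1-form `γ`
and a 4-form `δ` on the standard basis of `ℝ⁷`. -/
def wedgeEval214 (β : AlternatingMap ℝ V7 ℝ (Fin 2)) (γ : AlternatingMap ℝ V7 ℝ (Fin 1))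
    (δ : AlternatingMap ℝ V7 ℝ (Fin 4)) : ℝ :=
  (1 / 48 : ℝ) * ∑ σ : Equiv.Perm (Fin 7), ((Equiv.Perm.sign σ : ℤ) : ℝ) *
    (β ![e7 (σ 0), e7 (σ 1)]) * (γ ![e7 (σ 2)]) *
    (δ ![e7 (σ 3), e7 (σ 4), e7 (σ 5), e7 (σ 6)])

namespace G2Aux

/-- The integer `1` or `0` according to whether bit `n` of `c` is set. -/
def tb (c n : ℕ) : ℤ := bif Nat.testBit c n then 1 else 0

/-- The components of `φ₀`, encoded by bit masks in base 7. -/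
def phiT (i j k : Fin 7) : ℤ :=
  tb 17354895685624104913368265916580324070507433186770155167669128207234983541927783322061529887539712 (49 * i.val + 7 * j.val + k.val)
  - tb 1093629599426336738169277757506258517263316920504811537223889937408436894903451661419913042653642752 (49 * i.val + 7 * j.val + k.val)

/-- The components of `⋆φ₀`, encoded by bit masks in base 7. -/
def psiT (i j k l : Fin 7) : ℤ :=
  tb 4018060822421795018734585276011626898438158726755878892584072559645514245290537539346908560011876005751208614335075083670090713982117656555923725552411802362424176241307580200619935498214825782008558830492635109868570015196843277603311553505061346565775901687509213757655762159647829608204795529577970655755666146451857275360778400687018814189676678997839898569808118108613835093996026916571852108232541989907801896948171319246740619487435757087715549135565252073825285757001079208870713106268701197209338463946700482439081570366870145061654050651149050657572356672785743697769876131097439910731748918295315784307844943889680903566929243895649463120816565376447730167896534966588592599636870522927579136 (343 * i.val + 49 * j.val + 7 * k.val + l.val)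
  - tb 62782200351254130998943641656213878997003175306016322781391635670753861872447731593303745187393342592377301773459735555530098489267281380933980479404889644281873110169894848968092729232011755682171463295692944236738112782123219509414579812440668348427633235112755031228061579298225806668989011486803285370230021451243004839475357672535774676597122739170387703768149621952369854036133691363392577789393430894673945333919045576753649032619908890395193075503689939823792835782746345619232699551209241821234100791350288569493809617753174400567145213047092322722503123206379222032415180830204543096630413096367651339446587717453433371165617907652057885665434183547229390226304522565577428890015234770599936 (343 * i.val + 49 * j.val + 7 * k.val + l.val)

/-- Integer Kronecker delta. -/
def dl (i j : Fin 7) : ℤ := bif Nat.beq i.val j.val then 1 else 0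

/-- Order sign. -/
def io (i j : Fin 7) : ℤ := bif Nat.ble i.val j.val then 1 else -1

/-- Two by two minors of delta. -/
def d2 (i j x y : Fin 7) : ℤ := dl i x * dl j y - dl i y * dl j x

/-- Three by three minors of delta. -/
def d3 (i j k x y z : Fin 7) : ℤ :=
  dl i x * d2 j k y z - dl i y * d2 j k x z + dl i z * d2 j k x y

/-- Four by four minors of delta. -/
def d4 (i j k l x y z w : Fin 7) : ℤ :=
  dl i x * d3 j k l y z w - dl i y * d3 j k l x z w + dl i z * d3 j k l x y w
    - dl i w * d3 j k l x y z

theorem e7_apply (i j : Fin 7) : e7 i j = (dl i j : ℝ) := by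
  revert i j
  intro i j
  by_cases h : i = j
  · subst h; simp [e7, dl]
  · have h' : (i : ℕ) ≠ j := fun hh => h (Fin.ext hh)
    have h2 : Nat.beq i.val j.val = false := by
      rw [← Bool.not_eq_true]; simpa using h'
    simp [e7, dl, h2, Ne.symm h]

theorem eForm3 (i j k x y z : Fin 7) :
    eForm ![x, y, z] ![e7 i, e7 j, e7 k] = (d3 i j k x y z : ℝ) := by
  change Matrix.det (Matrix.of fun t s : Fin 3 => (![e7 i, e7 j, e7 k] t) (![x, y, z] s)) = _
  rw [Matrix.det_fin_three]
  simp [e7_apply, d3, d2]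
  ring

theorem eForm4 (i j k l x y z w : Fin 7) :
    eForm ![x, y, z, w] ![e7 i, e7 j, e7 k, e7 l] = (d4 i j k l x y z w : ℝ) := by
  change Matrix.det (Matrix.of fun t s : Fin 4 => (![e7 i, e7 j, e7 k, e7 l] t) (![x, y, z, w] s)) = _
  rw [Matrix.det_succ_row_zero]
  simp [Fin.sum_univ_four, Matrix.det_fin_three, e7_apply, d4, d3, d2, Fin.succAbove]
  ring

theorem phiT_eq : ∀ i j k : Fin 7, d3 i j k 0 1 2 + d3 i j k 0 3 4 + d3 i j k 0 5 6
    + d3 i j k 1 3 5 - d3 i j k 1 4 6 - d3 i j k 2 3 6 - d3 i j k 2 4 5 = phiT i j k := by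
  decide +kernel

theorem psiT_eq : ∀ i j k l : Fin 7, d4 i j k l 3 4 5 6 + d4 i j k l 1 2 5 6
    + d4 i j k l 1 2 3 4 + d4 i j k l 0 2 4 6 - d4 i j k l 0 2 3 5 - d4 i j k l 0 1 4 5
    - d4 i j k l 0 1 3 6 = psiT i j k l := by
  decide +kernel

theorem phi0_apply (i j k : Fin 7) : phi0 ![e7 i, e7 j, e7 k] = (phiT i j k : ℝ) := by
  rw [← phiT_eq]
  simp only [phi0, AlternatingMap.add_apply, AlternatingMap.sub_apply, eForm3]
  push_cast
  ring

theorem psi0_apply (i j k l : Fin 7) :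
    psi0 ![e7 i, e7 j, e7 k, e7 l] = (psiT i j k l : ℝ) := by
  rw [← psiT_eq]
  simp only [psi0, AlternatingMap.add_apply, AlternatingMap.sub_apply, eForm4]
  push_cast
  ring

/-- The contraction identity `ψ_{pqij} φ_{ijk} = 4 φ_{pqk}`. -/
theorem psi_phi : ∀ p q k : Fin 7,
    ∑ i : Fin 7, ∑ j : Fin 7, psiT p q i j * phiT i j k = 4 * phiT p q k := by
  simp only [Fin.sum_univ_seven]
  decide +kernel

set_option synthInstance.maxSize 100000 in
set_option synthInstance.maxHeartbeats 400000 in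
/-- Componentwise Hodge duality of `φ₀` and `⋆φ₀`. -/
theorem hodge_aux : ∀ i j : Fin 7, i ≠ j → ∀ k, (i ≠ k ∧ j ≠ k) →
    ∀ l, (i ≠ l ∧ j ≠ l ∧ k ≠ l) → ∀ m, (i ≠ m ∧ j ≠ m ∧ k ≠ m ∧ l ≠ m) →
    ∀ n, (i ≠ n ∧ j ≠ n ∧ k ≠ n ∧ l ≠ n ∧ m ≠ n) →
    ∀ p, (i ≠ p ∧ j ≠ p ∧ k ≠ p ∧ l ≠ p ∧ m ≠ p ∧ n ≠ p) →
    io i j * io i k * io i l * io i m * io i n * io i p * io j k * io j l * io j m * io j n * io j p * io k l * io k m * io k n * io k p * io l m * io l n * io l p * io m n * io m p * io n p * psiT l m n p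
      = phiT i j k := by
  decide +kernel

theorem sign_eq (σ : Equiv.Perm (Fin 7)) : ((Equiv.Perm.sign σ : ℤˣ) : ℤ) =
    io (σ 0) (σ 1) * io (σ 0) (σ 2) * io (σ 0) (σ 3) * io (σ 0) (σ 4) * io (σ 0) (σ 5) * io (σ 0) (σ 6) * io (σ 1) (σ 2) * io (σ 1) (σ 3) * io (σ 1) (σ 4) * io (σ 1) (σ 5) * io (σ 1) (σ 6) * io (σ 2) (σ 3) * io (σ 2) (σ 4) * io (σ 2) (σ 5) * io (σ 2) (σ 6) * io (σ 3) (σ 4) * io (σ 3) (σ 5) * io (σ 3) (σ 6) * io (σ 4) (σ 5) * io (σ 4) (σ 6) * io (σ 5) (σ 6) := by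
  have key : ∀ s t : Fin 7, s ≠ t →
      (((if σ s < σ t then 1 else -1 : ℤˣ)) : ℤ) = io (σ s) (σ t) := by
    intro s t hst
    have h1 : σ s ≠ σ t := fun h => hst (σ.injective h)
    generalize σ s = u at *
    generalize σ t = v at *
    revert u v
    decide
  rw [Equiv.Perm.sign_eq_prod_prod_Ioi]
  have h0 : Finset.Ioi (0 : Fin 7) = {1, 2, 3, 4, 5, 6} := by decide
  have h1 : Finset.Ioi (1 : Fin 7) = {2, 3, 4, 5, 6} := by decide
  have h2 : Finset.Ioi (2 : Fin 7) = {3, 4, 5, 6} := by decide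
  have h3 : Finset.Ioi (3 : Fin 7) = {4, 5, 6} := by decide
  have h4 : Finset.Ioi (4 : Fin 7) = {5, 6} := by decide
  have h5 : Finset.Ioi (5 : Fin 7) = {6} := by decide
  have h6 : Finset.Ioi (6 : Fin 7) = ∅ := by decide
  rw [Fin.prod_univ_seven, h0, h1, h2, h3, h4, h5, h6]
  simp only [Units.val_mul, Units.coe_prod, Finset.prod_empty, Units.val_one]
  repeat rw [Finset.prod_insert (by decide)]
  simp only [Finset.prod_singleton]
  repeat rw [key _ _ (by decide)]
  ring

theorem hodge (σ : Equiv.Perm (Fin 7)) : ((Equiv.Perm.sign σ : ℤˣ) : ℤ)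
    * psiT (σ 3) (σ 4) (σ 5) (σ 6) = phiT (σ 0) (σ 1) (σ 2) := by
  have h : ∀ s t : Fin 7, s ≠ t → σ s ≠ σ t := fun s t hst e => hst (σ.injective e)
  rw [sign_eq]
  apply hodge_aux <;> (repeat' apply And.intro) <;> exact h _ _ (by decide)

theorem phiT_zero : ∀ i j k : Fin 7, (i = j ∨ i = k ∨ j = k) → phiT i j k = 0 := by
  decide +kernel

theorem alt_sum_apply {k : ℕ} (f : Fin 7 → AlternatingMap ℝ V7 ℝ (Fin k)) (v : Fin k → V7) :
    (∑ i, f i) v = ∑ i, f i v := by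
  simp only [Fin.sum_univ_seven, AlternatingMap.add_apply]

theorem sum_tail {n : ℕ} (p : Fin (n + 1)) (H : Fin (n + 1) → ℝ) (hp : H p = 0) :
    ∑ q : Fin n, H (Equiv.swap 0 p q.succ) = ∑ j, H j := by
  rw [← Equiv.sum_comp (Equiv.swap 0 p) H, Fin.sum_univ_succ, Equiv.swap_apply_left, hp, zero_add]

theorem sum_decompose {n : ℕ} (f : Equiv.Perm (Fin (n + 1)) → ℝ) :
    ∑ σ, f σ = ∑ p, ∑ e : Equiv.Perm (Fin n), f (Equiv.Perm.decomposeFin.symm (p, e)) := by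
  rw [← Equiv.sum_comp Equiv.Perm.decomposeFin.symm f, Fintype.sum_prod_type]

/-- Any injective triple is hit by exactly 24 permutations. -/
theorem sum_perm (F : Fin 7 → Fin 7 → Fin 7 → ℝ)
    (hF : ∀ i j k, (i = j ∨ i = k ∨ j = k) → F i j k = 0) :
    ∑ σ : Equiv.Perm (Fin 7), F (σ 0) (σ 1) (σ 2) = 24 * ∑ i, ∑ j, ∑ k, F i j k := by
  have h1 : ∀ {n : ℕ} (p : Fin (n + 2)) (e : Equiv.Perm (Fin (n + 1))),
      Equiv.Perm.decomposeFin.symm (p, e) 1 = Equiv.swap 0 p (e 0).succ := fun p e =>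
    Equiv.Perm.decomposeFin_symm_apply_one e p
  have h2 : ∀ (p : Fin 7) (e : Equiv.Perm (Fin 6)),
      Equiv.Perm.decomposeFin.symm (p, e) 2 = Equiv.swap 0 p (e 1).succ := fun p e =>
    Equiv.Perm.decomposeFin_symm_apply_succ e p 1
  rw [sum_decompose, Finset.mul_sum]
  refine Finset.sum_congr rfl fun p _ => ?_
  simp only [Equiv.Perm.decomposeFin_symm_apply_zero, h1, h2]
  rw [sum_decompose, ← sum_tail p (fun j => ∑ k, F p j k), Finset.mul_sum]
  · refine Finset.sum_congr rfl fun q _ => ?_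
    simp only [Equiv.Perm.decomposeFin_symm_apply_zero, h1]
    rw [sum_decompose, ← sum_tail p (fun k => F p _ k) (hF _ _ _ (by simp)),
      ← sum_tail q (fun s => F p _ (Equiv.swap 0 p s.succ)) (hF _ _ _ (by simp)), Finset.mul_sum]
    refine Finset.sum_congr rfl fun r _ => ?_
    simp only [Equiv.Perm.decomposeFin_symm_apply_zero, Finset.sum_const, Finset.card_univ,
      Fintype.card_perm, Fintype.card_fin, nsmul_eq_mul]
    norm_num [Nat.factorial]
  · exact Finset.sum_eq_zero fun k _ => hF _ _ _ (by simp)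

end G2Aux

/-- **Karigiannis' identity** for 2-multivectors on `(ℝ⁷, φ₀)`:
`(Q ⌟ ⋆φ₀) ∧ (Q ⌟ φ₀) ∧ ⋆φ₀ = 2 |Q ⌟ φ₀|² vol`, both sides evaluated on `(e₁, …, e₇)`
(`vol (e₁, …, e₇) = 1`, and `|γ|² = Σᵢ γ(eᵢ)²` is the Euclidean norm of a 1-form). -/
theorem contraction_wedge_identity (a : Matrix (Fin 7) (Fin 7) ℝ) (ha : aᵀ = -a) :
    wedgeEval214 (contr2 a psi0) (contr2 a phi0) psi0
      = 2 * ∑ i : Fin 7, (contr2 a phi0 ![e7 i]) ^ 2 := by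
  have hphi : ∀ k : Fin 7, contr2 a phi0 ![e7 k]
      = (1 / 2 : ℝ) * ∑ i, ∑ j, a i j * (G2Aux.phiT i j k : ℝ) := by
    intro k
    simp only [← G2Aux.phi0_apply]
    simp only [contr2, AlternatingMap.smul_apply, G2Aux.alt_sum_apply, smul_eq_mul]
    rfl
  have hpsi : ∀ k l : Fin 7, contr2 a psi0 ![e7 k, e7 l]
      = (1 / 2 : ℝ) * ∑ i, ∑ j, a i j * (G2Aux.psiT i j k l : ℝ) := by
    intro k l
    simp only [← G2Aux.psi0_apply]
    simp only [contr2, AlternatingMap.smul_apply, G2Aux.alt_sum_apply, smul_eq_mul]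
    rfl
  have hcon : ∀ k : Fin 7, ∑ i, ∑ j, contr2 a psi0 ![e7 i, e7 j] * (G2Aux.phiT i j k : ℝ)
      = 4 * contr2 a phi0 ![e7 k] := by
    intro k
    simp only [hphi, hpsi]
    have h := fun p q => congrArg (Int.cast : ℤ → ℝ) (G2Aux.psi_phi p q k)
    push_cast at h
    calc _ = (1 / 2 : ℝ) * ∑ p, ∑ q, a p q *
          ∑ i, ∑ j, (G2Aux.psiT p q i j : ℝ) * (G2Aux.phiT i j k : ℝ) := by
          simp only [Finset.mul_sum, Finset.sum_mul]
          have e1 : ∀ G : Fin 7 → Fin 7 → Fin 7 → Fin 7 → ℝ,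
              ∑ i, ∑ j, ∑ p, ∑ q, G i j p q = ∑ p, ∑ q, ∑ i, ∑ j, G i j p q := by
            intro G
            calc _ = ∑ i, ∑ p, ∑ j, ∑ q, G i j p q :=
                  Finset.sum_congr rfl fun i _ => Finset.sum_comm
              _ = ∑ p, ∑ i, ∑ j, ∑ q, G i j p q := Finset.sum_comm
              _ = ∑ p, ∑ i, ∑ q, ∑ j, G i j p q := by
                  refine Finset.sum_congr rfl fun p _ => Finset.sum_congr rfl fun i _ => ?_
                  exact Finset.sum_comm
              _ = _ := Finset.sum_congr rfl fun p _ => Finset.sum_comm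
          rw [e1]
          simp only [mul_assoc]
      _ = (1 / 2 : ℝ) * ∑ p, ∑ q, 4 * (a p q * (G2Aux.phiT p q k : ℝ)) := by
          simp only [h, mul_left_comm]
      _ = _ := by
          simp only [← Finset.mul_sum]
          ring
  have hw : wedgeEval214 (contr2 a psi0) (contr2 a phi0) psi0 = (1 / 48 : ℝ) *
      ∑ σ : Equiv.Perm (Fin 7), (fun i j k => contr2 a psi0 ![e7 i, e7 j]
        * contr2 a phi0 ![e7 k] * (G2Aux.phiT i j k : ℝ)) (σ 0) (σ 1) (σ 2) := by
    unfold wedgeEval214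
    congr 1
    refine Finset.sum_congr rfl fun σ _ => ?_
    beta_reduce
    rw [G2Aux.psi0_apply, ← G2Aux.hodge]
    push_cast
    ring
  rw [hw, G2Aux.sum_perm (fun i j k => contr2 a psi0 ![e7 i, e7 j]
        * contr2 a phi0 ![e7 k] * (G2Aux.phiT i j k : ℝ)) (fun i j k h => by simp [G2Aux.phiT_zero i j k h])]
  have hs : ∑ i, ∑ j, ∑ k, contr2 a psi0 ![e7 i, e7 j] * contr2 a phi0 ![e7 k]
      * (G2Aux.phiT i j k : ℝ) = ∑ k, 4 * (contr2 a phi0 ![e7 k]) ^ 2 := by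
    calc _ = ∑ i, ∑ k, ∑ j, contr2 a psi0 ![e7 i, e7 j] * contr2 a phi0 ![e7 k]
          * (G2Aux.phiT i j k : ℝ) := Finset.sum_congr rfl fun i _ => Finset.sum_comm
      _ = ∑ k, ∑ i, ∑ j, contr2 a psi0 ![e7 i, e7 j] * contr2 a phi0 ![e7 k]
          * (G2Aux.phiT i j k : ℝ) := Finset.sum_comm
      _ = ∑ k, contr2 a phi0 ![e7 k] *
          ∑ i, ∑ j, contr2 a psi0 ![e7 i, e7 j] * (G2Aux.phiT i j k : ℝ) := by
          simp only [Finset.mul_sum]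
          refine Finset.sum_congr rfl fun k _ => Finset.sum_congr rfl fun i _ =>
            Finset.sum_congr rfl fun j _ => by ring
      _ = _ := by
          refine Finset.sum_congr rfl fun k _ => ?_
          rw [hcon]; ring
  rw [hs, ← Finset.mul_sum]
  ring

end
end
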